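/- Assume Schanuel's Conjecture. In the setup described, every finite subset T ⊆ S satisfying D(T) = D·|T| has cardinality |T| ≤ δ₁ + δ₂. -/

import Mathlib

open Complex Set

noncomputable section

/-- `f` is an exponential polynomial, i.e. an element of the ring `𝓔`. -/
def IsExpPoly (f : ℂ → ℂ) : Prop :=
  ∃ (N : ℕ) (lam mu : Fin N → ℂ),
    ∀ z : ℂ, f z = ∑ i, lam i * Complex.exp (mu i * z)

/-- `h` divides `f` in the ring `𝓔`. -/
def EDvd (h f : ℂ → ℂ) : Prop :=
  ∃ q : ℂ → ℂ, IsExpPoly q ∧ f = h * q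

/-- `f` is a unit of the ring `𝓔`. -/
def EUnit (f : ℂ → ℂ) : Prop :=
  IsExpPoly f ∧ ∃ g : ℂ → ℂ, IsExpPoly g ∧ f * g = 1

/-- `f` is irreducible in the ring `𝓔`. -/
def EIrreducible (f : ℂ → ℂ) : Prop :=
  IsExpPoly f ∧ f ≠ 0 ∧ ¬ EUnit f ∧
    ∀ g h : ℂ → ℂ, IsExpPoly g → IsExpPoly h → f = g * h → EUnit g ∨ EUnit h

/-- canonical representation: pairwise distinct exponents, nonzero coefficients. -/
def IsCanonicalRep (f : ℂ → ℂ) {N : ℕ} (lam mu : Fin N → ℂ) : Prop :=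
  (∀ i, lam i ≠ 0) ∧ Function.Injective mu ∧
    ∀ z : ℂ, f z = ∑ i, lam i * Complex.exp (mu i * z)

/-- `f` is a simple exponential polynomial: its support has `ℚ`-dimension 1. -/
def IsSimple (f : ℂ → ℂ) : Prop :=
  ∃ (N : ℕ) (lam mu : Fin N → ℂ), IsCanonicalRep f lam mu ∧
    Module.finrank ℚ (Submodule.span ℚ (Set.range mu)) = 1

/-- Transcendence degree over `ℚ` of (the field generated by) a set of complex numbers. -/
noncomputable def trdegQ (s : Set ℂ) : Cardinal.{0} :=
  ⨆ t : {t : Finset ℂ // ↑t ⊆ s ∧ AlgebraicIndependent ℚ (Subtype.val : {x : ℂ // x ∈ t} → ℂ)},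
    (t.1.card : Cardinal)

/-- Schanuel's Conjecture. -/
def SchanuelConjecture : Prop :=
  ∀ (n : ℕ) (lam : Fin n → ℂ), LinearIndependent ℚ lam →
    (n : Cardinal) ≤ trdegQ (Set.range lam ∪ Set.range fun i => Complex.exp (lam i))


lemma IsExpPoly.of_fintype {ι : Type*} [Fintype ι] (f : ℂ → ℂ) (lam mu : ι → ℂ)
    (h : ∀ z, f z = ∑ i, lam i * Complex.exp (mu i * z)) : IsExpPoly f := by
  let e := Fintype.equivFin ι
  refine ⟨Fintype.card ι, lam ∘ e.symm, mu ∘ e.symm, fun z => ?_⟩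
  rw [h, ← e.symm.sum_comp]
  rfl

lemma IsExpPoly.add {f g : ℂ → ℂ} (hf : IsExpPoly f) (hg : IsExpPoly g) : IsExpPoly (f + g) := by
  obtain ⟨N, a, m, h⟩ := hf
  obtain ⟨N', a', m', h'⟩ := hg
  refine .of_fintype (ι := Fin N ⊕ Fin N') _ (Sum.elim a a') (Sum.elim m m') fun z => ?_
  simp [h, h']

lemma IsExpPoly.mul {f g : ℂ → ℂ} (hf : IsExpPoly f) (hg : IsExpPoly g) : IsExpPoly (f * g) := by
  obtain ⟨N, a, m, h⟩ := hf
  obtain ⟨N', a', m', h'⟩ := hg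
  refine .of_fintype (ι := Fin N × Fin N') _ (fun p => a p.1 * a' p.2)
    (fun p => m p.1 + m' p.2) fun z => ?_
  simp only [Pi.mul_apply, h, h', Finset.sum_mul_sum, Fintype.sum_prod_type]
  refine Finset.sum_congr rfl fun i _ => Finset.sum_congr rfl fun j _ => ?_
  rw [add_mul, Complex.exp_add]
  ring

lemma IsExpPoly.single (c a : ℂ) : IsExpPoly (fun z => c * Complex.exp (a * z)) :=
  ⟨1, fun _ => c, fun _ => a, fun z => by simp⟩

lemma EUnit.mul {f g : ℂ → ℂ} (hf : EUnit f) (hg : EUnit g) : EUnit (f * g) := by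
  obtain ⟨h1, f', h2, h3⟩ := hf
  obtain ⟨h1', g', h2', h3'⟩ := hg
  refine ⟨h1.mul h1', f' * g', h2.mul h2', ?_⟩
  rw [mul_mul_mul_comm, h3, h3', one_mul]

lemma isExpPoly_aeval {K : Type*} [Field K] [Algebra K ℂ] {D : ℕ} (b : Fin D → ℂ)
    (P : MvPolynomial (Fin D) K) :
    IsExpPoly (fun z => MvPolynomial.aeval (fun i => Complex.exp (b i * z)) P) := by
  induction P using MvPolynomial.induction_on with
  | C a => simpa using IsExpPoly.single (algebraMap K ℂ a) 0
  | add p q hp hq => simpa using! hp.add hq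
  | mul_X p i hp => simpa using! hp.mul (IsExpPoly.single 1 (b i))

lemma exists_mvPoly (K : IntermediateField ℚ ℂ) {D N : ℕ} (b : Fin D → ℂ) (lam mu : Fin N → ℂ)
    (hlam : ∀ k, lam k ∈ K) (hmu : ∀ k, mu k ∈ AddSubgroup.closure (Set.range b)) :
    ∃ (F : MvPolynomial (Fin D) K) (c : ℂ), ∀ z,
      MvPolynomial.aeval (fun i => Complex.exp (b i * z)) F =
        Complex.exp (c * z) * ∑ k, lam k * Complex.exp (mu k * z) := by
  have h : ∀ k, ∃ n : Fin D → ℤ, ∑ i, n i • b i = mu k := by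
    intro k
    have := hmu k
    rw [← Submodule.span_int_eq_addSubgroupClosure, Submodule.mem_toAddSubgroup,
      Submodule.mem_span_range_iff_exists_fun] at this
    exact this
  choose n hn using h
  let m : Fin D → ℤ := fun i => ∑ k, |n k i|
  have hm : ∀ k i, 0 ≤ n k i + m i := by
    intro k i
    have : |n k i| ≤ m i :=
      Finset.single_le_sum (f := fun k => |n k i|) (fun _ _ => abs_nonneg _) (Finset.mem_univ k)
    have := neg_abs_le (n k i)
    linarith
  refine ⟨∑ k, MvPolynomial.C ⟨lam k, hlam k⟩ * ∏ i, MvPolynomial.X i ^ (n k i + m i).toNat,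
    ∑ i, m i • b i, fun z => ?_⟩
  rw [map_sum, Finset.mul_sum]
  refine Finset.sum_congr rfl fun k _ => ?_
  simp only [map_mul, map_prod, map_pow, MvPolynomial.aeval_X, MvPolynomial.aeval_C]
  change lam k * _ = _
  rw [mul_left_comm, ← Complex.exp_add, ← add_mul, ← hn, ← Finset.sum_add_distrib,
    Finset.sum_mul, Complex.exp_sum]
  congr 1
  refine Finset.prod_congr rfl fun i _ => ?_
  rw [← Complex.exp_nat_mul]
  congr 1
  have : (((n k i + m i).toNat : ℤ) : ℂ) = n k i + m i := by
    rw [Int.toNat_of_nonneg (hm k i)]; push_cast; rfl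
  rw [Int.cast_natCast] at this
  rw [this, zsmul_eq_mul, zsmul_eq_mul]
  ring

/-- A common factor of the associated polynomials vanishing at a point is impossible. -/
lemma no_common_factor (K : IntermediateField ℚ ℂ) {D : ℕ} (b : Fin D → ℂ) (f g : ℂ → ℂ)
    (hfirr : EIrreducible f) (hgirr : EIrreducible g)
    (hdist : ¬ ∃ u : ℂ → ℂ, EUnit u ∧ f = u * g)
    (F G : MvPolynomial (Fin D) K) (c d : ℂ)
    (hF : ∀ z, MvPolynomial.aeval (fun i => Complex.exp (b i * z)) F = Complex.exp (c * z) * f z)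
    (hG : ∀ z, MvPolynomial.aeval (fun i => Complex.exp (b i * z)) G = Complex.exp (d * z) * g z)
    (s : ℂ) (P : MvPolynomial (Fin D) K) (hPF : P ∣ F) (hPG : P ∣ G)
    (hP : MvPolynomial.aeval (fun i => Complex.exp (b i * s)) P = 0) : False := by
  let p : ℂ → ℂ := fun z => MvPolynomial.aeval (fun i => Complex.exp (b i * z)) P
  have hp : IsExpPoly p := isExpPoly_aeval b P
  have hpu : ¬ EUnit p := by
    rintro ⟨-, q, -, hq⟩
    have := congrFun hq s
    simp [p, hP] at this
  have key : ∀ (f : ℂ → ℂ) (F : MvPolynomial (Fin D) K) (c : ℂ), EIrreducible f → P ∣ F →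
      (∀ z, MvPolynomial.aeval (fun i => Complex.exp (b i * z)) F = Complex.exp (c * z) * f z) →
      ∃ q, EUnit q ∧ f = p * q := by
    rintro f F c hf ⟨Q, rfl⟩ hF
    let q : ℂ → ℂ := (fun z => MvPolynomial.aeval (fun i => Complex.exp (b i * z)) Q) *
      (fun z => 1 * Complex.exp (-c * z))
    have hq : IsExpPoly q := (isExpPoly_aeval b Q).mul (.single _ _)
    have hfq : f = p * q := by
      funext z
      have := hF z
      rw [map_mul] at this
      simp only [p, q, Pi.mul_apply, one_mul]
      rw [← mul_assoc, this, mul_right_comm, ← Complex.exp_add]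
      simp
    exact ⟨q, (hf.2.2.2 p q hp hq hfq).resolve_left hpu, hfq⟩
  obtain ⟨q, hq, hfq⟩ := key f F c hfirr hPF hF
  obtain ⟨r, hr, hgr⟩ := key g G d hgirr hPG hG
  obtain ⟨hr1, r', hr2, hr3⟩ := hr
  refine hdist ⟨q * r', hq.mul ⟨hr2, r, hr1, by rw [mul_comm, hr3]⟩, ?_⟩
  rw [hfq, hgr]
  calc p * q = p * q * (r * r') := by rw [hr3, mul_one]
    _ = _ := by ring

/-- Rank of the algebraic matroid bounded through `trdegQ`. -/
lemma eRk_le_of_trdegQ {C : Set ℂ} {δ : ℕ} (h : trdegQ C = δ) :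
    (AlgebraicIndependent.matroid ℚ ℂ).eRk C ≤ δ := by
  have hfin : ∀ t : Finset ℂ, ↑t ⊆ C → (AlgebraicIndependent.matroid ℚ ℂ).Indep ↑t →
      t.card ≤ δ := by
    intro t ht hi
    have h1 : (t.card : Cardinal) ≤ trdegQ C :=
      le_ciSup_of_le Cardinal.bddAbove_of_small ⟨t, ht, hi⟩ le_rfl
    rw [h] at h1
    exact_mod_cast h1
  rw [Matroid.eRk_le_iff]
  intro I hIC hI
  by_contra hlt
  rw [not_le] at hlt
  have : ((δ + 1 : ℕ) : ℕ∞) ≤ I.encard := by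
    have := Order.add_one_le_of_lt hlt
    exact_mod_cast this
  obtain ⟨t, htI, ht⟩ := Set.exists_subset_encard_eq this
  have htf : t.Finite := Set.finite_of_encard_eq_coe ht
  have := hfin htf.toFinset (by simpa using htI.trans hIC) (by simpa using hI.subset htI)
  rw [htf.encard_eq_coe_toFinset_card] at ht
  have ht' : htf.toFinset.card = δ + 1 := by exact_mod_cast ht
  omega

lemma trdegQ_le_eRk {C : Set ℂ} {n R : ℕ} (h : (n : Cardinal) ≤ trdegQ C)
    (hR : (AlgebraicIndependent.matroid ℚ ℂ).eRk C ≤ R) : n ≤ R := by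
  have : trdegQ C ≤ (R : Cardinal) := by
    refine ciSup_le' ?_
    rintro ⟨t, ht, hi⟩
    have h1 : (AlgebraicIndependent.matroid ℚ ℂ).Indep (↑t : Set ℂ) := hi
    have h2 := (h1.encard_le_eRk_of_subset ht).trans hR
    rw [Set.encard_coe_eq_coe_finsetCard] at h2
    have h3 : t.card ≤ R := by exact_mod_cast h2
    exact_mod_cast h3
  exact_mod_cast h.trans this


lemma aux_poly {A L : Type*} [CommRing A] [IsDomain A] [UniqueFactorizationMonoid A] [Field L]
    [Algebra A L] [FaithfulSMul A L] (x : L) (F G : Polynomial A) (hF : F ≠ 0)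
    (hFx : Polynomial.aeval x F = 0) (hGx : Polynomial.aeval x G = 0) :
    ∃ P, P ∣ F ∧ P ∣ G ∧ Polynomial.aeval x P = 0 := by
  obtain ⟨P, hPF, hPi, hPx⟩ : ∃ P, P ∣ F ∧ Irreducible P ∧ Polynomial.aeval x P = 0 := by
    obtain ⟨f, hf, hfF⟩ := UniqueFactorizationMonoid.exists_prime_factors F hF
    have h : Polynomial.aeval x f.prod = 0 := by
      obtain ⟨u, hu⟩ := hfF.symm
      rw [← hu, map_mul, hFx, zero_mul]
    rw [map_multiset_prod, Multiset.prod_eq_zero_iff, Multiset.mem_map] at h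
    obtain ⟨P, hP, hPx⟩ := h
    exact ⟨P, (Multiset.dvd_prod hP).trans hfF.dvd, (hf P hP).irreducible, hPx⟩
  refine ⟨P, hPF, ?_, hPx⟩
  have hdeg : P.natDegree ≠ 0 := by
    intro h
    rw [Polynomial.natDegree_eq_zero] at h
    obtain ⟨a, rfl⟩ := h
    rw [Polynomial.aeval_C, map_eq_zero_iff _ (FaithfulSMul.algebraMap_injective A L)] at hPx
    subst hPx
    simp at hPi
  have hprim := hPi.isPrimitive hdeg
  let := FractionRing.liftAlgebra A L
  have := FractionRing.isScalarTower_liftAlgebra A L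
  have hirr := (hprim.irreducible_iff_irreducible_map_fraction_map (K := FractionRing A)).1 hPi
  have h1 : minpoly (FractionRing A) x ∣ P.map (algebraMap A (FractionRing A)) :=
    minpoly.dvd _ _ (by simpa using hPx)
  have h2 : minpoly (FractionRing A) x ∣ G.map (algebraMap A (FractionRing A)) :=
    minpoly.dvd _ _ (by simpa using hGx)
  have h3 : Associated (minpoly (FractionRing A) x) (P.map (algebraMap A (FractionRing A))) :=
    (hirr.dvd_iff.1 h1).resolve_left (minpoly.not_isUnit _ _) |>.symm
  exact hprim.dvd_of_fraction_map_dvd_fraction_map (K := FractionRing A) (h3.symm.dvd.trans h2)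

lemma aux_opt {K L τ : Type*} [Field K] [Field L] [Algebra K L] (x : Option τ → L)
    (h : AlgebraicIndependent K (fun i => x (some i))) (F G : MvPolynomial (Option τ) K)
    (hF : F ≠ 0) (hFx : MvPolynomial.aeval x F = 0) (hGx : MvPolynomial.aeval x G = 0) :
    ∃ P, P ∣ F ∧ P ∣ G ∧ MvPolynomial.aeval x P = 0 := by
  let := (MvPolynomial.aeval (R := K) (fun i => x (some i))).toAlgebra
  have hf : FaithfulSMul (MvPolynomial τ K) L :=
    (faithfulSMul_iff_algebraMap_injective _ _).2 h
  let e := MvPolynomial.optionEquivLeft K τ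
  have key : ∀ P : MvPolynomial (Option τ) K,
      Polynomial.aeval (x none) (e P) = MvPolynomial.aeval x P := by
    intro P
    have : ((Polynomial.aeval (R := MvPolynomial τ K) (x none)).toRingHom.comp
      (e : MvPolynomial (Option τ) K →+* _)) = (MvPolynomial.aeval (R := K) x).toRingHom := by
      refine MvPolynomial.ringHom_ext ?_ ?_
      · intro r
        simp [e, RingHom.algebraMap_toAlgebra]
      · rintro (_ | i) <;> simp [e, RingHom.algebraMap_toAlgebra]
    exact congrArg (fun φ => φ P) this
  obtain ⟨P, h1, h2, h3⟩ := aux_poly (x none) (e F) (e G) (by simpa using hF)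
    (by rw [key, hFx]) (by rw [key, hGx])
  refine ⟨e.symm P, ?_, ?_, ?_⟩
  · simpa using map_dvd e.symm h1
  · simpa using map_dvd e.symm h2
  · rw [← key]; simpa using h3

lemma aux_ne {K L σ : Type*} [Field K] [Field L] [Algebra K L] (x : σ → L) (j : σ)
    (h : AlgebraicIndepOn K x {j}ᶜ) (F G : MvPolynomial σ K)
    (hF : F ≠ 0) (hFx : MvPolynomial.aeval x F = 0) (hGx : MvPolynomial.aeval x G = 0) :
    ∃ P, P ∣ F ∧ P ∣ G ∧ MvPolynomial.aeval x P = 0 := by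
  classical
  let e := MvPolynomial.renameEquiv K (Equiv.optionSubtypeNe j).symm
  let y : Option {i // i ≠ j} → L := fun o => x (Equiv.optionSubtypeNe j o)
  have key : ∀ P, MvPolynomial.aeval y (e P) = MvPolynomial.aeval x P := by
    intro P
    simp only [e, MvPolynomial.renameEquiv_apply, MvPolynomial.aeval_rename]
    congr 2
    ext i
    exact congrArg x (Equiv.apply_symm_apply (Equiv.optionSubtypeNe j) i)
  obtain ⟨P, h1, h2, h3⟩ := aux_opt (K := K) y h (e F) (e G)
    (by simpa using hF) (by rw [key, hFx]) (by rw [key, hGx])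
  refine ⟨e.symm P, ?_, ?_, ?_⟩
  · simpa using map_dvd e.symm h1
  · simpa using map_dvd e.symm h2
  · rw [← key]; simpa using h3

lemma aux_basis {K L σ : Type*} [Field K] [Field L] [Algebra K L] [Finite σ] (x : σ → L)
    (F G : MvPolynomial σ K)
    (hF : F ≠ 0) (hFx : MvPolynomial.aeval x F = 0) (hGx : MvPolynomial.aeval x G = 0)
    (hno : ¬ ∃ P, P ∣ F ∧ P ∣ G ∧ MvPolynomial.aeval x P = 0) :
    ∃ B : Set L, B.encard + 2 ≤ Nat.card σ ∧ ∀ i, IsAlgebraic (Algebra.adjoin K B) (x i) := by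
  obtain ⟨B, hB⟩ := (AlgebraicIndependent.matroid K L).exists_isBasis (range x)
  rw [AlgebraicIndependent.matroid_isBasis_iff] at hB
  obtain ⟨hB1, hB2, hB3⟩ := hB
  refine ⟨B, ?_, fun i => hB3 _ ⟨i, rfl⟩⟩
  obtain ⟨I, rfl, hI⟩ := exists_image_eq_injOn_of_subset_range hB2
  have hind : AlgebraicIndepOn K x I := by
    have := hB1.comp (fun i : I => (⟨x i, i, i.2, rfl⟩ : x '' I)) (by
      intro a b hab
      exact Subtype.ext (hI a.2 b.2 (congrArg Subtype.val hab)))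
    exact this
  rw [hI.encard_image]
  have hc : (1 : ℕ∞) < Iᶜ.encard := by
    by_contra hle
    rw [not_lt, encard_le_one_iff_eq] at hle
    rcases hle with h0 | ⟨j, hj⟩
    · rw [compl_empty_iff] at h0
      subst h0
      have h : AlgebraicIndependent K x := by
        have := hind.comp (fun i : σ => (⟨i, mem_univ i⟩ : (univ : Set σ))) (by
          intro a b hab
          simpa using hab)
        exact this
      exact hF (h (by rw [hFx, map_zero]))
    · have : I = {j}ᶜ := by rw [← hj, compl_compl]
      subst this
      exact hno (aux_ne x j hind F G hF hFx hGx)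
  have h2 : (2 : ℕ∞) ≤ Iᶜ.encard := by
    have := Order.add_one_le_of_lt hc
    simpa [one_add_one_eq_two] using this
  calc I.encard + 2 ≤ I.encard + Iᶜ.encard := by gcongr
    _ = _ := by rw [encard_add_encard_compl, encard_univ, ENat.card_eq_coe_natCard]

lemma aux_closure (C B : Set ℂ) (a : ℂ)
    (h : IsAlgebraic (Algebra.adjoin (IntermediateField.adjoin ℚ C) B) a) :
    a ∈ (AlgebraicIndependent.matroid ℚ ℂ).closure (C ∪ B) := by
  rw [AlgebraicIndependent.matroid_closure_eq]
  change IsAlgebraic (Algebra.adjoin ℚ (C ∪ B)) a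
  let E := IntermediateField.adjoin ℚ (C ∪ B)
  have hK : IntermediateField.adjoin ℚ C ≤ E := IntermediateField.adjoin.mono _ _ _ subset_union_left
  have hle : ∀ y : Algebra.adjoin (IntermediateField.adjoin ℚ C) B, (y : ℂ) ∈ E := by
    rintro ⟨y, hy⟩
    change y ∈ E
    induction hy using Algebra.adjoin_induction with
    | mem y hy => exact IntermediateField.subset_adjoin _ _ (Or.inr hy)
    | algebraMap r => exact hK r.2
    | add x y _ _ hx hy => exact add_mem hx hy
    | mul x y _ _ hx hy => exact mul_mem hx hy
  let φ : Algebra.adjoin (IntermediateField.adjoin ℚ C) B →+* E :=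
    RingHom.codRestrict (Algebra.adjoin (IntermediateField.adjoin ℚ C) B).val.toRingHom E hle
  let := φ.toAlgebra
  have : IsScalarTower (Algebra.adjoin (IntermediateField.adjoin ℚ C) B) E ℂ :=
    .of_algebraMap_eq fun y => rfl
  have hE : IsAlgebraic E a := h.extendScalars (S := E) (by
    intro y z hyz
    exact Subtype.ext (congrArg (fun w : E => (w : ℂ)) hyz))
  open scoped IntermediateField.algebraAdjoinAdjoin in
  exact (IsFractionRing.isAlgebraic_iff (Algebra.adjoin ℚ (C ∪ B)) E ℂ).2 hE

/-- Assuming Schanuel's Conjecture: any finite `T ⊆ S` with `D(T) = D·|T|` has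
`|T| ≤ δ₁ + δ₂`. -/
theorem card_le_of_max_dimension (hSC : SchanuelConjecture)
    (f g : ℂ → ℂ) (N M : ℕ) (lam mu : Fin N → ℂ) (l em : Fin M → ℂ)
    (hfrep : IsCanonicalRep f lam mu) (hgrep : IsCanonicalRep g l em)
    (hfirr : EIrreducible f) (hgirr : EIrreducible g)
    (hdist : ¬ ∃ u : ℂ → ℂ, EUnit u ∧ f = u * g)
    (S : Set ℂ) (hSinf : S.Infinite)
    (hS : ∀ s ∈ S, s ≠ 0 ∧ f s = 0 ∧ g s = 0)
    (D : ℕ) (b : Fin D → ℂ)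
    (hD : Module.finrank ℚ (Submodule.span ℚ (Set.range mu ∪ Set.range em)) = D)
    (hbli : LinearIndependent ℤ b)
    (hbgen : AddSubgroup.closure (Set.range mu ∪ Set.range em) =
      AddSubgroup.closure (Set.range b))
    (δ₁ δ₂ : ℕ)
    (hδ₁ : trdegQ (Set.range lam ∪ Set.range l) = (δ₁ : Cardinal))
    (hδ₂ : trdegQ (Set.range mu ∪ Set.range em) = (δ₂ : Cardinal))
    (T : Finset ℂ) (hTS : ↑T ⊆ S)
    (hDT : Module.finrank ℚ
        (Submodule.span ℚ {x : ℂ | ∃ i : Fin D, ∃ s ∈ T, x = b i * s}) = D * T.card) :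
    T.card ≤ δ₁ + δ₂ := by
  classical
  rcases T.eq_empty_or_nonempty with rfl | hTne
  · simp
  let C1 : Set ℂ := Set.range lam ∪ Set.range l
  let C2 : Set ℂ := Set.range mu ∪ Set.range em
  let K := IntermediateField.adjoin ℚ C1
  have hmuC : ∀ x ∈ C2, x ∈ AddSubgroup.closure (Set.range b) := fun x hx => by
    rw [← hbgen]; exact AddSubgroup.subset_closure hx
  obtain ⟨F, c, hF⟩ := exists_mvPoly K b lam mu
    (fun k => IntermediateField.subset_adjoin _ _ (Or.inl ⟨k, rfl⟩))
    (fun k => hmuC _ (Or.inl ⟨k, rfl⟩))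
  obtain ⟨G, d, hG⟩ := exists_mvPoly K b l em
    (fun k => IntermediateField.subset_adjoin _ _ (Or.inr ⟨k, rfl⟩))
    (fun k => hmuC _ (Or.inr ⟨k, rfl⟩))
  simp only [← hfrep.2.2] at hF
  simp only [← hgrep.2.2] at hG
  have hF0 : F ≠ 0 := by
    rintro rfl
    apply hfirr.2.1
    funext z
    have := hF z
    simpa using this
  have hB : ∀ s ∈ T, ∃ B : Finset ℂ, B.card + 2 ≤ D ∧ ∀ i,
      Complex.exp (b i * s) ∈ (AlgebraicIndependent.matroid ℚ ℂ).closure (C1 ∪ ↑B) := by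
    intro s hs
    obtain ⟨-, hfs, hgs⟩ := hS s (hTS hs)
    obtain ⟨B, hB1, hB2⟩ := aux_basis (fun i => Complex.exp (b i * s)) F G hF0
      (by rw [hF, hfs, mul_zero]) (by rw [hG, hgs, mul_zero]) (by
        rintro ⟨P, h1, h2, h3⟩
        exact no_common_factor K b f g hfirr hgirr hdist F G c d hF hG s P h1 h2 h3)
    rw [Nat.card_eq_fintype_card, Fintype.card_fin] at hB1
    have hBf : B.Finite := by
      rw [← Set.encard_lt_top_iff]
      exact lt_of_le_of_lt (le_self_add.trans hB1) (ENat.coe_lt_top D)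
    refine ⟨hBf.toFinset, ?_, fun i => ?_⟩
    · rw [hBf.encard_eq_coe_toFinset_card] at hB1
      exact_mod_cast hB1
    · rw [hBf.coe_toFinset]
      exact aux_closure C1 B _ (hB2 i)
  choose! B hB1 hB2 using hB
  let W : Finset ℂ := T.biUnion B
  let U : Set ℂ := C1 ∪ C2 ∪ (↑T ∪ ↑W)
  have hli : LinearIndependent ℚ (fun p : Fin D × T => b p.1 * (p.2 : ℂ)) := by
    rw [linearIndependent_iff_card_eq_finrank_span, Set.finrank]
    have : Set.range (fun p : Fin D × T => b p.1 * (p.2 : ℂ)) =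
        {x : ℂ | ∃ i : Fin D, ∃ s ∈ T, x = b i * s} := by
      ext x
      constructor
      · rintro ⟨⟨i, s⟩, rfl⟩
        exact ⟨i, s, s.2, rfl⟩
      · rintro ⟨i, s, hs, rfl⟩
        exact ⟨(i, ⟨s, hs⟩), rfl⟩
    rw [this, hDT]
    simp
  let e : Fin (D * T.card) ≃ Fin D × T := (Fintype.equivFinOfCardEq (by simp)).symm
  have hsc := hSC (D * T.card) _ (hli.comp e e.injective)
  have hbU : ∀ x ∈ AddSubgroup.closure C2,
      x ∈ (AlgebraicIndependent.matroid ℚ ℂ).closure U := by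
    intro x hx
    rw [AlgebraicIndependent.matroid_closure_eq]
    induction hx using AddSubgroup.closure_induction with
    | mem x hx =>
      rw [← AlgebraicIndependent.matroid_closure_eq]
      exact Matroid.mem_closure_of_mem' _ (Or.inl (Or.inr hx))
    | zero => exact zero_mem _
    | add x y _ _ hx hy => exact add_mem hx hy
    | neg x _ hx => exact neg_mem hx
  have hsub : Set.range ((fun p : Fin D × T => b p.1 * (p.2 : ℂ)) ∘ e) ∪
      Set.range (fun i => Complex.exp (((fun p : Fin D × T => b p.1 * (p.2 : ℂ)) ∘ e) i)) ⊆
      (AlgebraicIndependent.matroid ℚ ℂ).closure U := by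
    rintro x (⟨i, rfl⟩ | ⟨i, rfl⟩)
    · have h1 := hbU (b (e i).1) (by
        change _ ∈ AddSubgroup.closure (Set.range mu ∪ Set.range em)
        rw [hbgen]; exact AddSubgroup.subset_closure ⟨_, rfl⟩)
      have h2 : ((e i).2 : ℂ) ∈ (AlgebraicIndependent.matroid ℚ ℂ).closure U :=
        Matroid.mem_closure_of_mem' _ (Or.inr (Or.inl (e i).2.2))
      rw [AlgebraicIndependent.matroid_closure_eq] at h1 h2 ⊢
      exact mul_mem h1 h2
    · refine Matroid.closure_subset_closure _ ?_ (hB2 (e i).2 (e i).2.2 (e i).1)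
      refine Set.union_subset (fun x hx => Or.inl (Or.inl hx)) fun x hx => Or.inr (Or.inr ?_)
      exact Finset.mem_coe.2 (Finset.mem_biUnion.2 ⟨_, (e i).2.2, hx⟩)
  have hW : W.card ≤ T.card * (D - 2) := by
    refine Finset.card_biUnion_le_card_mul _ _ _ fun s hs => ?_
    have := hB1 s hs
    omega
  have hrk : (AlgebraicIndependent.matroid ℚ ℂ).eRk U ≤
      ((δ₁ + δ₂ + (T.card + T.card * (D - 2)) : ℕ) : ℕ∞) := by
    have h1 := eRk_le_of_trdegQ hδ₁
    have h2 := eRk_le_of_trdegQ hδ₂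
    have h3 : (AlgebraicIndependent.matroid ℚ ℂ).eRk ↑T ≤ (T.card : ℕ∞) :=
      (Matroid.eRk_le_encard _ _).trans (by rw [Set.encard_coe_eq_coe_finsetCard])
    have h4 : (AlgebraicIndependent.matroid ℚ ℂ).eRk ↑W ≤ ((T.card * (D - 2) : ℕ) : ℕ∞) :=
      (Matroid.eRk_le_encard _ _).trans (by
        rw [Set.encard_coe_eq_coe_finsetCard]; exact_mod_cast hW)
    rw [Nat.cast_add, Nat.cast_add, Nat.cast_add]
    exact (Matroid.eRk_union_le_eRk_add_eRk _ _ _).trans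
      (add_le_add ((Matroid.eRk_union_le_eRk_add_eRk _ _ _).trans (add_le_add h1 h2))
        ((Matroid.eRk_union_le_eRk_add_eRk _ _ _).trans (add_le_add h3 h4)))
  have hfinal := trdegQ_le_eRk hsc
    (((Matroid.eRk_mono _ hsub).trans_eq (Matroid.eRk_closure_eq _ _)).trans hrk)
  obtain ⟨s, hs⟩ := hTne
  have hD2 : 2 ≤ D := le_trans (by omega) (hB1 s hs)
  obtain ⟨k, rfl⟩ := Nat.exists_eq_add_of_le hD2
  rw [Nat.add_sub_cancel_left] at hfinal
  nlinarith
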